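/- (Robustness theorem.) Let r and s be pr-relations, let (v, h) ∈ r with v ∉ T(s), and set r' := r \ {(v, h)} and s' := s ∪ {(v, h)} (a single-tuple transformation, so that T(r) ∪ T(s) = T(r') ∪ T(s')). Then for every A ⊆ T(r) and B ⊆ T(s) there exist A' ⊆ T(r') and B' ⊆ T(s') with A ∪ B = A' ∪ B' and such that the event-variable formulas φ^r_A ∧ ψ^s_B and φ^{r'}_{A'} ∧ ψ^{s'}_{B'} are logically equivalent (namely A' = A \ {v}, and B' = B ∪ {v} if v ∈ A, else B' = B). Hence the event-variable formulas obtained for the possible-world relations of the integration through the pair (r, s) are equivalent to those obtained through the pair (r', s'). -/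

import Mathlib

/-!
The formula `φ^r_A` is a conjunction over the pairs of `r`, and it depends on `A` only through
`A ∩ T(r)`. Moving a set `d ⊆ r` of pairs from `r` to `s` therefore moves the conjunct `φ^d_A`
from one formula to the other, as long as the second formula is taken at a set that agrees with
`A` on `T(d)` and with `B` on `T(s)`. When `T(d)` and `T(s)` are disjoint, `B ∪ (A ∩ T(d))` is
such a set, and `A ∩ T(r \ d)` serves for the remaining pairs of `r`. For functional `r` and
`d = {(v, h)}` these are `B ∪ (A ∩ {v})` and `A \ {v}`.
-/

open scoped Classical

variable {Var Tup : Type*}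

/-- A pr-relation is functional: each tuple occurs in at most one tuple–formula pair. -/
def Functional (r : Set (Tup × ((Var → Bool) → Bool))) : Prop :=
  ∀ t (f g : (Var → Bool) → Bool), (t, f) ∈ r → (t, g) ∈ r → f = g

/-- The tuple set `T(r)` of a pr-relation: the set of first components. -/
def tupleSet (r : Set (Tup × ((Var → Bool) → Bool))) : Set Tup :=
  Prod.fst '' r

/-- The possible world `r_μ` of a pr-relation under an assignment `μ`. -/
def world (r : Set (Tup × ((Var → Bool) → Bool))) (μ : Var → Bool) : Set Tup :=
  { t | ∃ f : (Var → Bool) → Bool, (t, f) ∈ r ∧ f μ = true }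

/-- The possible worlds `PW(r)` of a pr-relation. -/
def PW (r : Set (Tup × ((Var → Bool) → Bool))) : Set (Set Tup) :=
  { A | ∃ μ : Var → Bool, A = world r μ }

/-- `A ⊆ T` and `B ⊆ T'` are compatible if `A ∩ (T ∩ T') = B ∩ (T ∩ T')`. -/
def Compatible (T T' A B : Set Tup) : Prop :=
  A ∩ (T ∩ T') = B ∩ (T ∩ T')

/-- A formula depends only on the variables in `V`. -/
def DependsOnly (f : (Var → Bool) → Bool) (V : Set Var) : Prop :=
  ∀ μ μ' : Var → Bool, (∀ v ∈ V, μ v = μ' v) → f μ = f μ'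

/-- The tuple–formula pairs of the integration `q = r ⊎ s`: pairs of `r`, together with
the pairs of `s` whose tuple is not a tuple of `r` (for common tuples the formula is
taken from `r`). -/
def integ (r s : Set (Tup × ((Var → Bool) → Bool))) :
    Set (Tup × ((Var → Bool) → Bool)) :=
  r ∪ { p | p ∈ s ∧ p.1 ∉ tupleSet r }

/-- The event constraints of the integration `q = r ⊎ s`: the pairs `(f_t, g_t)` for
each common tuple `t`, where `f_t` and `g_t` are the formulas of `t` in `r` and `s`. -/
def integConstraints (r s : Set (Tup × ((Var → Bool) → Bool))) :
    Set (((Var → Bool) → Bool) × ((Var → Bool) → Bool)) :=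
  { fg | ∃ t : Tup, (t, fg.1) ∈ r ∧ (t, fg.2) ∈ s }

/-- An assignment is valid for the integration `r ⊎ s` if it satisfies every event
constraint `f_t ≡ g_t` coming from a common tuple `t`. -/
def ValidInteg (r s : Set (Tup × ((Var → Bool) → Bool))) (μ : Var → Bool) : Prop :=
  ∀ t (f g : (Var → Bool) → Bool), (t, f) ∈ r → (t, g) ∈ s → f μ = g μ

/-- The possible worlds of the integration `r ⊎ s` (over valid assignments). -/
def PWinteg (r s : Set (Tup × ((Var → Bool) → Bool))) : Set (Set Tup) :=
  { A | ∃ μ : Var → Bool, ValidInteg r s μ ∧ A = world (integ r s) μ }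

/-- An assignment is valid for a set of event constraints. -/
def ValidEpr (C : Set (((Var → Bool) → Bool) × ((Var → Bool) → Bool)))
    (μ : Var → Bool) : Prop :=
  ∀ f g : (Var → Bool) → Bool, (f, g) ∈ C → f μ = g μ

/-- The possible worlds of an epr-relation `q` with event constraints `C`. -/
def PWepr (q : Set (Tup × ((Var → Bool) → Bool)))
    (C : Set (((Var → Bool) → Bool) × ((Var → Bool) → Bool))) : Set (Set Tup) :=
  { A | ∃ μ : Var → Bool, ValidEpr C μ ∧ A = world q μ }

/-- The event-variable formula `φ^r_A` of a relation `A ⊆ T(r)`: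
`φ^r_A μ = true` iff `f μ = true` for every `(t, f) ∈ r` with `t ∈ A` and
`f μ = false` for every `(t, f) ∈ r` with `t ∉ A`. -/
noncomputable def evf (r : Set (Tup × ((Var → Bool) → Bool))) (A : Set Tup) :
    (Var → Bool) → Bool :=
  fun μ => decide (∀ (t : Tup) (f : (Var → Bool) → Bool), (t, f) ∈ r → (f μ = true ↔ t ∈ A))

/-- The event-variable formula `Ξ^q_A` of `A ⊆ T(q)` for an epr-relation `q` with
event constraints `C` (conjoining all event constraints). -/
noncomputable def eevf (q : Set (Tup × ((Var → Bool) → Bool)))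
    (C : Set (((Var → Bool) → Bool) × ((Var → Bool) → Bool))) (A : Set Tup) :
    (Var → Bool) → Bool :=
  fun μ => decide (ValidEpr C μ ∧
    ∀ (t : Tup) (h : (Var → Bool) → Bool), (t, h) ∈ q → (h μ = true ↔ t ∈ A))

section EventVariableFormula

variable {r s d : Set (Tup × ((Var → Bool) → Bool))} {A B : Set Tup} {μ : Var → Bool}

theorem tupleSet_union : tupleSet (r ∪ s) = tupleSet r ∪ tupleSet s :=
  Set.image_union ..

theorem evf_eq_true_iff :
    evf r A μ = true ↔ ∀ t (f : (Var → Bool) → Bool), (t, f) ∈ r → (f μ = true ↔ t ∈ A) :=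
  decide_eq_true_iff

theorem evf_union : evf (r ∪ s) A μ = (evf r A μ && evf s A μ) := by
  rw [Bool.eq_iff_iff]
  simp only [Bool.and_eq_true, evf_eq_true_iff, Set.mem_union, or_imp, forall_and]

theorem evf_inter_tupleSet : evf r (A ∩ tupleSet r) = evf r A := by
  funext μ
  rw [Bool.eq_iff_iff, evf_eq_true_iff, evf_eq_true_iff]
  refine forall₃_congr fun t f htf => ?_
  have ht : t ∈ tupleSet r := ⟨(t, f), htf, rfl⟩
  simp only [Set.mem_inter_iff, ht, and_true]

theorem evf_congr (hAB : A ∩ tupleSet r = B ∩ tupleSet r) : evf r A = evf r B := by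
  rw [← evf_inter_tupleSet, hAB, evf_inter_tupleSet]

theorem evf_union_of_disjoint (hds : Disjoint (tupleSet d) (tupleSet s)) (hB : B ⊆ tupleSet s) :
    evf (s ∪ d) (B ∪ A ∩ tupleSet d) μ = (evf s B μ && evf d A μ) := by
  have agree_s : (B ∪ A ∩ tupleSet d) ∩ tupleSet s = B ∩ tupleSet s := by
    rw [Set.union_inter_distrib_right, Set.inter_assoc, hds.inter_eq, Set.inter_empty,
      Set.union_empty]
  have agree_d : (B ∪ A ∩ tupleSet d) ∩ tupleSet d = A ∩ tupleSet d := by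
    rw [Set.union_inter_distrib_right, (hds.symm.mono_left hB).inter_eq, Set.empty_union,
      Set.inter_assoc, Set.inter_self]
  rw [evf_union, evf_congr agree_s, evf_congr agree_d]

theorem evf_and_evf_eq_of_subset_of_disjoint (hdr : d ⊆ r)
    (hds : Disjoint (tupleSet d) (tupleSet s)) (hB : B ⊆ tupleSet s) :
    (evf r A μ && evf s B μ) =
      (evf (r \ d) (A ∩ tupleSet (r \ d)) μ && evf (s ∪ d) (B ∪ A ∩ tupleSet d) μ) :=
  calc (evf r A μ && evf s B μ)
    _ = (evf (r \ d ∪ d) A μ && evf s B μ) := by rw [Set.sdiff_union_of_subset hdr]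
    _ = (evf (r \ d) A μ && (evf s B μ && evf d A μ)) := by
      rw [evf_union, Bool.and_assoc, Bool.and_comm (evf d A μ)]
    _ = _ := by rw [evf_inter_tupleSet, evf_union_of_disjoint hds hB]

end EventVariableFormula

theorem robustness_single_tuple_transformation_general
    (r s d : Set (Tup × ((Var → Bool) → Bool)))
    (hdr : d ⊆ r) (hds : Disjoint (tupleSet d) (tupleSet s)) :
    tupleSet r ∪ tupleSet s = tupleSet (r \ d) ∪ tupleSet (s ∪ d) ∧
    ∀ A : Set Tup, A ⊆ tupleSet r → ∀ B : Set Tup, B ⊆ tupleSet s →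
      ∃ A' : Set Tup, A' ⊆ tupleSet (r \ d) ∧
      ∃ B' : Set Tup, B' ⊆ tupleSet (s ∪ d) ∧
        A ∪ B = A' ∪ B' ∧
        ∀ μ : Var → Bool,
          (evf r A μ && evf s B μ) = (evf (r \ d) A' μ && evf (s ∪ d) B' μ) := by
  have tupleSet_split : tupleSet r = tupleSet (r \ d) ∪ tupleSet d := by
    rw [← tupleSet_union, Set.sdiff_union_of_subset hdr]
  refine ⟨?_, fun A hA B hB => ⟨A ∩ tupleSet (r \ d), Set.inter_subset_right,
    B ∪ A ∩ tupleSet d, ?_, ?_, fun μ => evf_and_evf_eq_of_subset_of_disjoint hdr hds hB⟩⟩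
  · rw [tupleSet_split, tupleSet_union, Set.union_assoc, Set.union_comm (tupleSet d)]
  · rw [tupleSet_union]
    exact Set.union_subset_union hB Set.inter_subset_right
  · calc A ∪ B
      _ = A ∩ (tupleSet (r \ d) ∪ tupleSet d) ∪ B := by
        rw [← tupleSet_split, Set.inter_eq_left.2 hA]
      _ = A ∩ tupleSet (r \ d) ∪ (B ∪ A ∩ tupleSet d) := by
        rw [Set.inter_union_distrib_left, Set.union_assoc, Set.union_comm B]

/-- Robustness theorem: a single-tuple transformation `r' = r \ {(v, h)}`,
`s' = s ∪ {(v, h)}` preserves the overall tuple set, and for every `A ⊆ T(r)` and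
`B ⊆ T(s)` there are `A' ⊆ T(r')` and `B' ⊆ T(s')` with `A ∪ B = A' ∪ B'` such that the
event-variable formulas `φ^r_A ∧ ψ^s_B` and `φ^{r'}_{A'} ∧ ψ^{s'}_{B'}` are logically
equivalent.  Hence the event-variable formulas obtained for the possible-world relations
of the integration through `(r, s)` are equivalent to those obtained through
`(r', s')`. -/
theorem robustness_single_tuple_transformation
    (r s : Set (Tup × ((Var → Bool) → Bool)))
    (hrFin : r.Finite) (hsFin : s.Finite)
    (hrFun : Functional r) (hsFun : Functional s)
    (v : Tup) (h : (Var → Bool) → Bool)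
    (hvr : (v, h) ∈ r) (hvs : v ∉ tupleSet s) :
    tupleSet r ∪ tupleSet s = tupleSet (r \ {(v, h)}) ∪ tupleSet (s ∪ {(v, h)}) ∧
    ∀ A : Set Tup, A ⊆ tupleSet r → ∀ B : Set Tup, B ⊆ tupleSet s →
      ∃ A' : Set Tup, A' ⊆ tupleSet (r \ {(v, h)}) ∧
      ∃ B' : Set Tup, B' ⊆ tupleSet (s ∪ {(v, h)}) ∧
        A ∪ B = A' ∪ B' ∧
        ∀ μ : Var → Bool,
          (evf r A μ && evf s B μ) =
            (evf (r \ {(v, h)}) A' μ && evf (s ∪ {(v, h)}) B' μ) :=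
  robustness_single_tuple_transformation_general r s {(v, h)} (Set.singleton_subset_iff.2 hvr)
    (by rwa [tupleSet, Set.image_singleton, Set.disjoint_singleton_left])
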